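/- arXiv:cond-mat/0412368 — 3 statements merged into one kernel-verified Lean document; each statement's English description precedes it below -/
import Mathlib

section
/- For all vertices i and j, the sequence t ↦ (P^t)_{ij} converges, as the integer t tends to infinity, to d(j) / Σ_k d(k). In particular the limit does not depend on the starting vertex i. -/
open Matrix Filter

/-!
Doeblin's contraction argument. If the entries of `p` sum to `1`, a stochastic matrix all of whose
rows dominate `ε p` acts on the vectors `f` with `p ⬝ᵥ f = 0` as the nonnegative matrix obtained by
subtracting `ε p` from each row; the new row sums are `1 - ε`, so it contracts the sup norm by
`1 - ε`. For a primitive stochastic matrix `P` with stationary vector `p` some power of `P` is such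
a matrix and `P` preserves the condition `p ⬝ᵥ f = 0`, so `P ^ t *ᵥ f` tends to the constant vector
`p ⬝ᵥ f` for every `f`.

The degrees are stationary for the random walk as soon as row sums and column sums of the weights
agree, and self-loops turn connectedness into primitivity, as they let a walk idle at its endpoint.
-/

section Primitive

variable {ι R : Type*} [Fintype ι] [DecidableEq ι] [Ring R] [LinearOrder R] [IsStrictOrderedRing R]
  {A B : Matrix ι ι R}

lemma pow_apply_pos_of_le (hA : ∀ i j, 0 ≤ A i j) (hdiag : ∀ i, 0 < A i i) {i j : ι} {k m : ℕ}
    (hkm : k ≤ m) (hk : 0 < (A ^ k) i j) : 0 < (A ^ m) i j := by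
  induction m, hkm using Nat.le_induction with
  | base => exact hk
  | succ m _ ih =>
    rw [pow_succ, mul_apply]
    exact Finset.sum_pos' (fun l _ => mul_nonneg (pow_apply_nonneg hA m i l) (hA l j))
      ⟨j, Finset.mem_univ j, mul_pos ih (hdiag j)⟩

lemma isPrimitive_of_diag_pos (hA : ∀ i j, 0 ≤ A i j) (hdiag : ∀ i, 0 < A i i)
    (hconn : ∀ i j, ∃ k : ℕ, 0 < (A ^ k) i j) : A.IsPrimitive := by
  have hpos : ∀ᶠ m : ℕ in atTop, ∀ i j, 0 < (A ^ m) i j := by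
    simp only [eventually_all]
    intro i j
    obtain ⟨k, hk⟩ := hconn i j
    exact (eventually_ge_atTop k).mono fun m hkm => pow_apply_pos_of_le hA hdiag hkm hk
  exact ⟨hA, ((eventually_gt_atTop 0).and hpos).exists⟩

lemma isPrimitive_of_pos_iff (hA : A.IsPrimitive) (hB : ∀ i j, 0 ≤ B i j)
    (hAB : ∀ i j, 0 < A i j ↔ 0 < B i j) : B.IsPrimitive := by
  obtain ⟨k, hk, hAk⟩ := hA.exists_pos_pow
  have hquiver : A.toQuiver = B.toQuiver := by simp only [toQuiver, hAB]
  refine ⟨hB, k, hk, fun i j => ?_⟩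
  rw [pow_apply_pos_iff_nonempty_path hB, ← hquiver, ← pow_apply_pos_iff_nonempty_path hA.nonneg]
  exact hAk i j

lemma sum_row_pos_of_isPrimitive (hA : A.IsPrimitive) (i : ι) : 0 < ∑ j, A i j := by
  obtain ⟨k, hk, hAk⟩ := hA.exists_pos_pow
  refine (Finset.sum_nonneg fun j _ => hA.nonneg i j).lt_of_ne' fun hsum => (hAk i i).ne' ?_
  have hrow : ∀ j, A i j = 0 := by
    simpa only [Finset.mem_univ, true_imp_iff] using
      (Finset.sum_eq_zero_iff_of_nonneg fun j _ => hA.nonneg i j).1 hsum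
  rw [← Nat.succ_pred_eq_of_pos hk, pow_succ', mul_apply]
  simp only [hrow, zero_mul, Finset.sum_const_zero]

end Primitive

lemma norm_mulVec_le_of_sum_norm_le {m n R : Type*} [Fintype m] [Fintype n]
    [NonUnitalSeminormedRing R] {Q : Matrix m n R} {c : ℝ} (hc : 0 ≤ c)
    (hQ : ∀ i, ∑ j, ‖Q i j‖ ≤ c) (f : n → R) : ‖Q *ᵥ f‖ ≤ c * ‖f‖ := by
  refine (pi_norm_le_iff_of_nonneg (by positivity)).2 fun i => ?_
  calc ‖(Q *ᵥ f) i‖ ≤ ∑ j, ‖Q i j‖ * ‖f j‖ := norm_sum_le_of_le _ fun j _ => norm_mul_le _ _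
    _ ≤ ∑ j, ‖Q i j‖ * ‖f‖ := by gcongr with j; exact norm_le_pi_norm f j
    _ = (∑ j, ‖Q i j‖) * ‖f‖ := (Finset.sum_mul ..).symm
    _ ≤ c * ‖f‖ := by gcongr; exact hQ i

lemma vecMul_pow_eq_self {ι R : Type*} [Fintype ι] [DecidableEq ι] [Semiring R]
    {P : Matrix ι ι R} {p : ι → R} (hp : p ᵥ* P = p) (t : ℕ) : p ᵥ* P ^ t = p := by
  induction t with
  | zero => rw [pow_zero, vecMul_one]
  | succ t ih => rw [pow_succ, ← vecMul_vecMul, ih, hp]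

lemma exists_pos_forall_mul_le {m n : Type*} [Finite m] [Finite n] {Q : Matrix m n ℝ}
    (hQ : ∀ i j, 0 < Q i j) (p : n → ℝ) : ∃ ε > 0, ∀ i j, ε * p j ≤ Q i j := by
  have hsmall : ∀ᶠ ε in nhds (0 : ℝ), ∀ i j, ε * p j < Q i j := by
    simp only [eventually_all]
    intro i j
    have hlim : Tendsto (fun ε : ℝ => ε * p j) (nhds 0) (nhds 0) :=
      Continuous.tendsto' (by fun_prop) _ _ (zero_mul _)
    exact hlim.eventually_lt_const (hQ i j)
  obtain ⟨ε, hε_pos, hε⟩ := hsmall.exists_gt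
  exact ⟨ε, hε_pos, fun i j => (hε i j).le⟩

section Doeblin

variable {ι : Type*} [Fintype ι] {P : Matrix ι ι ℝ} {p f : ι → ℝ} {ε : ℝ}

lemma le_one_of_minorization (hP : ∀ i, ∑ j, P i j = 1) (hp : ∑ i, p i = 1)
    (hε : ∀ i j, ε * p j ≤ P i j) : ε ≤ 1 := by
  obtain ⟨i, -⟩ : (Finset.univ : Finset ι).Nonempty :=
    Finset.nonempty_of_sum_ne_zero (hp.trans_ne one_ne_zero)
  calc ε = ∑ j, ε * p j := by rw [← Finset.mul_sum, hp, mul_one]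
    _ ≤ ∑ j, P i j := Finset.sum_le_sum fun j _ => hε i j
    _ = 1 := hP i

lemma norm_mulVec_le_of_minorization (hP : ∀ i, ∑ j, P i j = 1) (hp : ∑ i, p i = 1)
    (hε : ∀ i j, ε * p j ≤ P i j) (hf : p ⬝ᵥ f = 0) : ‖P *ᵥ f‖ ≤ (1 - ε) * ‖f‖ := by
  let Q : Matrix ι ι ℝ := P - vecMulVec (fun _ => ε) p
  have hQ_apply : ∀ i j, Q i j = P i j - ε * p j := fun _ _ => rfl
  have hQ_nonneg : ∀ i j, 0 ≤ Q i j := fun i j => sub_nonneg.2 (hε i j)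
  have hQ_sum : ∀ i, ∑ j, Q i j = 1 - ε := fun i => by
    simp only [hQ_apply, Finset.sum_sub_distrib, ← Finset.mul_sum, hp, mul_one, hP]
  have hPQ : P *ᵥ f = Q *ᵥ f := by
    rw [sub_mulVec, vecMulVec_mulVec, hf, MulOpposite.op_zero, zero_smul, sub_zero]
  rw [hPQ]
  refine norm_mulVec_le_of_sum_norm_le (sub_nonneg.2 (le_one_of_minorization hP hp hε))
    (fun i => ?_) f
  simp only [Real.norm_of_nonneg (hQ_nonneg _ _), hQ_sum, le_refl]

variable [DecidableEq ι]

lemma norm_mulVec_le_of_mem_rowStochastic (hP : P ∈ rowStochastic ℝ ι) (f : ι → ℝ) :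
    ‖P *ᵥ f‖ ≤ ‖f‖ := by
  rw [← one_mul ‖f‖]
  refine norm_mulVec_le_of_sum_norm_le zero_le_one (fun i => ?_) f
  simp only [Real.norm_of_nonneg (nonneg_of_mem_rowStochastic hP), sum_row_of_mem_rowStochastic hP,
    le_refl]

lemma norm_pow_mulVec_le_of_minorization (hP : ∀ i, ∑ j, P i j = 1) (hp : ∑ i, p i = 1)
    (hstat : p ᵥ* P = p) (hε : ∀ i j, ε * p j ≤ P i j) (hf : p ⬝ᵥ f = 0) (t : ℕ) :
    ‖P ^ t *ᵥ f‖ ≤ (1 - ε) ^ t * ‖f‖ := by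
  induction t with
  | zero => simp
  | succ t ih =>
    have hft : p ⬝ᵥ (P ^ t *ᵥ f) = 0 := by rw [dotProduct_mulVec, vecMul_pow_eq_self hstat, hf]
    calc ‖P ^ (t + 1) *ᵥ f‖ = ‖P *ᵥ (P ^ t *ᵥ f)‖ := by rw [pow_succ', mulVec_mulVec]
      _ ≤ (1 - ε) * ‖P ^ t *ᵥ f‖ := norm_mulVec_le_of_minorization hP hp hε hft
      _ ≤ (1 - ε) * ((1 - ε) ^ t * ‖f‖) :=
        mul_le_mul_of_nonneg_left ih (sub_nonneg.2 (le_one_of_minorization hP hp hε))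
      _ = (1 - ε) ^ (t + 1) * ‖f‖ := by ring

lemma tendsto_pow_mulVec_zero_of_isPrimitive (hP : P ∈ rowStochastic ℝ ι) (hprim : P.IsPrimitive)
    (hp : ∑ i, p i = 1) (hstat : p ᵥ* P = p) (hf : p ⬝ᵥ f = 0) :
    Tendsto (fun t : ℕ => P ^ t *ᵥ f) atTop (nhds 0) := by
  obtain ⟨N, hN, hPN⟩ := hprim.exists_pos_pow
  obtain ⟨ε, hε_pos, hε⟩ := exists_pos_forall_mul_le hPN p
  have hPN_sum : ∀ i, ∑ j, (P ^ N) i j = 1 := sum_row_of_mem_rowStochastic (pow_mem hP N)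
  have hbound : ∀ t : ℕ, ‖P ^ t *ᵥ f‖ ≤ (1 - ε) ^ (t / N) * ‖f‖ := fun t =>
    calc ‖P ^ t *ᵥ f‖ = ‖P ^ (t % N) *ᵥ ((P ^ N) ^ (t / N) *ᵥ f)‖ := by
          rw [mulVec_mulVec, ← pow_mul, ← pow_add, Nat.mod_add_div]
      _ ≤ ‖(P ^ N) ^ (t / N) *ᵥ f‖ := norm_mulVec_le_of_mem_rowStochastic (pow_mem hP _) _
      _ ≤ (1 - ε) ^ (t / N) * ‖f‖ := norm_pow_mulVec_le_of_minorization hPN_sum hp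
          (vecMul_pow_eq_self hstat N) hε hf _
  have hgeom : Tendsto (fun t : ℕ => (1 - ε) ^ (t / N)) atTop (nhds 0) :=
    (tendsto_pow_atTop_nhds_zero_of_lt_one (sub_nonneg.2 (le_one_of_minorization hPN_sum hp hε))
      (sub_lt_self 1 hε_pos)).comp (Nat.tendsto_div_const_atTop hN.ne')
  exact squeeze_zero_norm hbound (by simpa only [zero_mul] using hgeom.mul_const ‖f‖)

theorem tendsto_pow_mulVec_of_isPrimitive (hP : P ∈ rowStochastic ℝ ι) (hprim : P.IsPrimitive)
    (hp : ∑ i, p i = 1) (hstat : p ᵥ* P = p) (f : ι → ℝ) :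
    Tendsto (fun t : ℕ => P ^ t *ᵥ f) atTop (nhds fun _ => p ⬝ᵥ f) := by
  let c : ι → ℝ := (p ⬝ᵥ f) • 1
  have hc : ∀ t : ℕ, P ^ t *ᵥ c = c := fun t => by
    rw [mulVec_smul, one_vecMul_of_mem_rowStochastic (pow_mem hP t)]
  have hcentered : p ⬝ᵥ (f - c) = 0 := by
    rw [dotProduct_sub, dotProduct_smul, dotProduct_one, hp, smul_eq_mul, mul_one, sub_self]
  have hlim := (tendsto_pow_mulVec_zero_of_isPrimitive hP hprim hp hstat hcentered).add_const c
  simp only [mulVec_sub, hc, sub_add_cancel, zero_add] at hlim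
  convert hlim using 2
  ext i
  simp [c]

end Doeblin

section TransitionMatrix

variable {ι K : Type*} [Fintype ι] [Field K] {A : Matrix ι ι K}

/-- The transition matrix of the random walk on the weighted directed graph with weights `A`: a step
from `i` leads to `j` with probability proportional to `A i j`. Rows of `A` with sum `0` are sent to
`0` by the convention `x / 0 = 0`. -/
def transitionMatrix (A : Matrix ι ι K) : Matrix ι ι K :=
  of fun i j => A i j / ∑ k, A i k

lemma sum_row_vecMul_transitionMatrix (hA : ∀ i, ∑ j, A i j ≠ 0)
    (hbal : ∀ i, ∑ j, A j i = ∑ j, A i j) :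
    (fun i => ∑ j, A i j) ᵥ* transitionMatrix A = fun i => ∑ j, A i j := by
  ext b
  calc ∑ a, (∑ j, A a j) * (A a b / ∑ j, A a j) = ∑ a, A a b :=
        Finset.sum_congr rfl fun a _ => mul_div_cancel₀ _ (hA a)
    _ = ∑ j, A b j := hbal b

variable [DecidableEq ι] [LinearOrder K] [IsStrictOrderedRing K]

lemma transitionMatrix_mem_rowStochastic (hA : ∀ i j, 0 ≤ A i j) (hA_sum : ∀ i, ∑ j, A i j ≠ 0) :
    transitionMatrix A ∈ rowStochastic K ι := by
  refine mem_rowStochastic_iff_sum.2 ⟨fun i j => ?_, fun i => ?_⟩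
  · exact div_nonneg (hA i j) (Finset.sum_nonneg fun k _ => hA i k)
  · simp only [transitionMatrix, of_apply, ← Finset.sum_div, div_self (hA_sum i)]

lemma isPrimitive_transitionMatrix (hA : A.IsPrimitive) : (transitionMatrix A).IsPrimitive := by
  have hsum := sum_row_pos_of_isPrimitive hA
  refine isPrimitive_of_pos_iff hA (fun i j => div_nonneg (hA.nonneg i j) (hsum i).le) fun i j => ?_
  exact (div_pos_iff_of_pos_right (hsum i)).symm

end TransitionMatrix

theorem random_walk_limit_probability_general {ι : Type*} [Fintype ι] [DecidableEq ι]
    {A : Matrix ι ι ℝ} (hA : A.IsPrimitive) (hbal : ∀ i, ∑ j, A j i = ∑ j, A i j)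
    {d : ι → ℝ} (hd : ∀ i, d i = ∑ j, A i j)
    {P : Matrix ι ι ℝ} (hP : ∀ i j, P i j = A i j / d i) (i j : ι) :
    Tendsto (fun t : ℕ => (P ^ t) i j) atTop (nhds (d j / ∑ k, d k)) := by
  obtain rfl : d = fun i => ∑ j, A i j := funext hd
  obtain rfl : P = transitionMatrix A := Matrix.ext hP
  have hdeg : ∀ i, 0 < ∑ j, A i j := sum_row_pos_of_isPrimitive hA
  let S : ℝ := ∑ i, ∑ j, A i j
  have hS : S ≠ 0 := (Finset.sum_pos (fun i _ => hdeg i) ⟨i, Finset.mem_univ i⟩).ne'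
  let p : ι → ℝ := S⁻¹ • fun i => ∑ j, A i j
  have hp : ∑ i, p i = 1 := by
    simp only [p, Pi.smul_apply, smul_eq_mul, ← Finset.mul_sum]
    exact inv_mul_cancel₀ hS
  have hstat : p ᵥ* transitionMatrix A = p := by
    rw [smul_vecMul, sum_row_vecMul_transitionMatrix (fun i => (hdeg i).ne') hbal]
  have hlim := tendsto_pow_mulVec_of_isPrimitive
    (transitionMatrix_mem_rowStochastic hA.nonneg fun i => (hdeg i).ne')
    (isPrimitive_transitionMatrix hA) hp hstat (Pi.single j 1)
  simpa [p, S, div_eq_inv_mul] using tendsto_pi_nhds.1 hlim i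

/-- For all vertices `i` and `j`, `(P^t) i j` converges, as the integer `t`
tends to infinity, to `d j / ∑ k, d k` (independently of the starting vertex `i`). -/
theorem random_walk_limit_probability
    (n : ℕ) (hn : 0 < n)
    (A : Matrix (Fin n) (Fin n) ℝ)
    (hsym : A.IsSymm)
    (h01 : ∀ i j, A i j = 0 ∨ A i j = 1)
    (hloop : ∀ i, A i i = 1)
    (hconn : ∀ i j, ∃ k : ℕ, 0 < (A ^ k) i j)
    (d : Fin n → ℝ) (hd : ∀ i, d i = ∑ j, A i j)
    (P : Matrix (Fin n) (Fin n) ℝ) (hP : ∀ i j, P i j = A i j / d i)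
    (i j : Fin n) :
    Tendsto (fun t : ℕ => (P ^ t) i j) atTop (nhds (d j / ∑ k, d k)) := by
  have hA : A.IsPrimitive := isPrimitive_of_diag_pos
    (fun i j => (h01 i j).elim Eq.ge fun h => h ▸ zero_le_one)
    (fun i => hloop i ▸ zero_lt_one) hconn
  exact random_walk_limit_probability_general hA
    (fun i => Finset.sum_congr rfl fun j _ => hsym.apply i j) hd hP i j
end

section
/- For disjoint nonempty finite subsets C₁, C₂ ⊆ I with union C₃ = C₁ ∪ C₂, the within-cluster sums of squares satisfy W(C₃) = W(C₁) + W(C₂) + (|C₁|·|C₂| / (|C₁| + |C₂|)) · ‖g(C₁) − g(C₂)‖². -/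
/-!
Deviations from a center of mass have weighted sum zero, so moving the reference point of a cluster
from its center `c` to `p` raises the weighted sum of squared distances by exactly
`(∑ w i) * ‖c - p‖²`. Do this for both clusters with `p` the center of the union: the increase is
that of two point masses, placed at the cluster centers, about their own center `p`. Since `p`
divides the segment between the two centers in inverse proportion to the masses `a` and `b`, this
is `a * b / (a + b)` times the squared distance between them.
-/

open AffineMap Finset

section CenterMass

variable {R E I : Type*} [Field R] [AddCommGroup E] [Module R E] {w : I → R} {s t : Finset I}

theorem centerMass_one (s : Finset I) (x : I → E) :
    s.centerMass (1 : I → R) x = (s.card : R)⁻¹ • ∑ i ∈ s, x i := by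
  simp [centerMass]

theorem sum_weights_smul_centerMass (x : I → E) (hs : ∑ i ∈ s, w i ≠ 0) :
    (∑ i ∈ s, w i) • s.centerMass w x = ∑ i ∈ s, w i • x i :=
  smul_inv_smul₀ hs _

theorem sum_smul_sub_centerMass (x : I → E) (hs : ∑ i ∈ s, w i ≠ 0) :
    ∑ i ∈ s, w i • (x i - s.centerMass w x) = 0 := by
  simp_rw [smul_sub, sum_sub_distrib, ← sum_smul, sum_weights_smul_centerMass x hs, sub_self]

theorem centerMass_union_eq_lineMap [DecidableEq I] (x : I → E) (hst : Disjoint s t)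
    (hs : ∑ i ∈ s, w i ≠ 0) (ht : ∑ i ∈ t, w i ≠ 0) (hadd : ∑ i ∈ s, w i + ∑ i ∈ t, w i ≠ 0) :
    (s ∪ t).centerMass w x = lineMap (s.centerMass w x) (t.centerMass w x)
      ((∑ i ∈ t, w i) / (∑ i ∈ s, w i + ∑ i ∈ t, w i)) := by
  rw [centerMass, sum_union hst, sum_union hst, ← sum_weights_smul_centerMass x hs,
    ← sum_weights_smul_centerMass x ht, lineMap_apply_module]
  match_scalars <;> field

end CenterMass

theorem mul_norm_sub_lineMap_sq_add {E : Type*} [SeminormedAddCommGroup E] [NormedSpace ℝ E]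
    {a b : ℝ} (hab : a + b ≠ 0) (u v : E) :
    a * ‖u - lineMap u v (b / (a + b))‖ ^ 2 + b * ‖v - lineMap u v (b / (a + b))‖ ^ 2 =
      a * b / (a + b) * ‖u - v‖ ^ 2 := by
  have hcompl : 1 - b / (a + b) = a / (a + b) := by field
  simp only [← dist_eq_norm, dist_left_lineMap, dist_right_lineMap, hcompl, mul_pow,
    Real.norm_eq_abs, sq_abs]
  field

section InnerProduct

variable {E I : Type*} [SeminormedAddCommGroup E] [InnerProductSpace ℝ E]

/-- The within-cluster sum of squares `W(C)` of the family `x`, with the point `x i` carrying the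
weight `w i`; the unweighted notion is the case of constant weight `1`. If the weights sum to zero
over `C`, the center of mass is the junk value `0`. -/
noncomputable def withinSumSq (w : I → ℝ) (x : I → E) (C : Finset I) : ℝ :=
  ∑ i ∈ C, w i * ‖x i - C.centerMass w x‖ ^ 2

theorem withinSumSq_one (x : I → E) (C : Finset I) :
    withinSumSq 1 x C = ∑ i ∈ C, ‖x i - (C.card : ℝ)⁻¹ • ∑ j ∈ C, x j‖ ^ 2 := by
  simp only [withinSumSq, centerMass_one, Pi.one_apply, one_mul]

variable {w : I → ℝ}

theorem sum_mul_norm_sub_sq_eq_withinSumSq_add {C : Finset I} (hC : ∑ i ∈ C, w i ≠ 0) (x : I → E)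
    (p : E) :
    ∑ i ∈ C, w i * ‖x i - p‖ ^ 2 =
      withinSumSq w x C + (∑ i ∈ C, w i) * ‖C.centerMass w x - p‖ ^ 2 := by
  set c := C.centerMass w x with hc
  have hcross : ∑ i ∈ C, w i * inner ℝ (x i - c) (c - p) = 0 := by
    simp_rw [← real_inner_smul_left, ← sum_inner, hc, sum_smul_sub_centerMass x hC, inner_zero_left]
  calc ∑ i ∈ C, w i * ‖x i - p‖ ^ 2
    _ = ∑ i ∈ C, (w i * ‖x i - c‖ ^ 2 + 2 * (w i * inner ℝ (x i - c) (c - p)) +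
          w i * ‖c - p‖ ^ 2) := by
      refine sum_congr rfl fun i _ => ?_
      rw [← sub_add_sub_cancel (x i) c p, norm_add_sq_real]
      ring
    _ = withinSumSq w x C + (∑ i ∈ C, w i) * ‖c - p‖ ^ 2 := by
      rw [sum_add_distrib, sum_add_distrib, ← mul_sum, hcross, ← sum_mul, mul_zero, add_zero,
        withinSumSq]

theorem ward_within_cluster_merge_general [DecidableEq I] (x : I → E) {C₁ C₂ : Finset I}
    (hdisj : Disjoint C₁ C₂) (h₁ : ∑ i ∈ C₁, w i ≠ 0) (h₂ : ∑ i ∈ C₂, w i ≠ 0)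
    (hadd : ∑ i ∈ C₁, w i + ∑ i ∈ C₂, w i ≠ 0) :
    withinSumSq w x (C₁ ∪ C₂) = withinSumSq w x C₁ + withinSumSq w x C₂ +
      (∑ i ∈ C₁, w i) * (∑ i ∈ C₂, w i) / (∑ i ∈ C₁, w i + ∑ i ∈ C₂, w i) *
        ‖C₁.centerMass w x - C₂.centerMass w x‖ ^ 2 := by
  rw [withinSumSq, sum_union hdisj, sum_mul_norm_sub_sq_eq_withinSumSq_add h₁,
    sum_mul_norm_sub_sq_eq_withinSumSq_add h₂, add_add_add_comm,
    centerMass_union_eq_lineMap x hdisj h₁ h₂ hadd, mul_norm_sub_lineMap_sq_add hadd]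

end InnerProduct

/-- for disjoint nonempty finite clusters `C₁`, `C₂` with union `C₃`,
`W(C₃) = W(C₁) + W(C₂) + (|C₁||C₂|/(|C₁|+|C₂|)) ‖g(C₁) − g(C₂)‖²`. -/
theorem ward_within_cluster_merge
    {E I : Type*} [NormedAddCommGroup E] [InnerProductSpace ℝ E]
    [Fintype I] [DecidableEq I]
    (x : I → E)
    (g : Finset I → E)
    (hg : ∀ C : Finset I, g C = ((C.card : ℝ))⁻¹ • ∑ i ∈ C, x i)
    (W : Finset I → ℝ)
    (hW : ∀ C : Finset I, W C = ∑ i ∈ C, ‖x i - g C‖ ^ 2)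
    (C₁ C₂ : Finset I) (h₁ : C₁.Nonempty) (h₂ : C₂.Nonempty)
    (hdisj : Disjoint C₁ C₂) :
    W (C₁ ∪ C₂) = W C₁ + W C₂ +
      ((C₁.card : ℝ) * (C₂.card : ℝ) / ((C₁.card : ℝ) + (C₂.card : ℝ))) *
        ‖g C₁ - g C₂‖ ^ 2 := by
  have hpos {C : Finset I} (hC : C.Nonempty) : 0 < ∑ i ∈ C, (1 : I → ℝ) i :=
    sum_pos (fun _ _ => one_pos) hC
  simpa [hW, hg, withinSumSq_one, centerMass_one] using ward_within_cluster_merge_general x hdisj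
    (hpos h₁).ne' (hpos h₂).ne' (add_pos (hpos h₁) (hpos h₂)).ne'
end

section
/- (Lance–Williams–Jambu formula) Let C₁, C₂, C ⊆ I be pairwise disjoint nonempty finite subsets and set C₃ = C₁ ∪ C₂. Then Δσ(C₃, C) = [ (|C₁| + |C|)·Δσ(C₁,C) + (|C₂| + |C|)·Δσ(C₂,C) − |C|·Δσ(C₁,C₂) ] / (|C₁| + |C₂| + |C|). -/
/-!
For a cluster `S` of mass `m(S)`, the product `m(S) · W(S)` is half the sum of the weighted squared
distances over all ordered pairs of points of `S` (Leibniz), as one sees by summing the parallel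
axis identity over all base points in `S`. A function of `S` given by a sum over pairs has vanishing
third differences, so `m · W` on `A ∪ B ∪ C` is determined by its values on `A`, `B`, `C` and their
pairwise unions. Since `m` is additive, this relation is the Lance–Williams–Jambu formula with its
denominator cleared.
-/

open Finset
open scoped RealInnerProductSpace

/-- The inertia of the cluster `S` of points `x i` with masses `w i` about its barycentre. For unit
masses it is the within-cluster sum of squares `W(S)`. -/
noncomputable def clusterInertia {E I : Type*} [SeminormedAddCommGroup E] [NormedSpace ℝ E]
    (w : I → ℝ) (x : I → E) (S : Finset I) : ℝ :=
  ∑ i ∈ S, w i * ‖x i - S.centerMass w x‖ ^ 2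

theorem clusterInertia_one {E I : Type*} [SeminormedAddCommGroup E] [NormedSpace ℝ E]
    (x : I → E) (S : Finset I) :
    clusterInertia 1 x S = ∑ i ∈ S, ‖x i - (#S : ℝ)⁻¹ • ∑ j ∈ S, x j‖ ^ 2 := by
  simp [clusterInertia, centerMass]

/-- The increase of a cluster criterion `W` when the clusters `A` and `B` are merged. For the
within-cluster sum of squares it is `N · Δσ(A, B)`. -/
def mergeCost {I G : Type*} [DecidableEq I] [AddGroup G] (W : Finset I → G) (A B : Finset I) : G :=
  W (A ∪ B) - W A - W B

section PairSums

variable {I : Type*} [DecidableEq I] {A B C : Finset I}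

theorem sum_sum_union_union_add {M : Type*} [AddCommMonoid M] (f : I → I → M)
    (hAB : Disjoint A B) (hAC : Disjoint A C) (hBC : Disjoint B C) :
    ∑ i ∈ A ∪ B ∪ C, ∑ j ∈ A ∪ B ∪ C, f i j +
        (∑ i ∈ A, ∑ j ∈ A, f i j + ∑ i ∈ B, ∑ j ∈ B, f i j + ∑ i ∈ C, ∑ j ∈ C, f i j) =
      ∑ i ∈ A ∪ B, ∑ j ∈ A ∪ B, f i j + ∑ i ∈ A ∪ C, ∑ j ∈ A ∪ C, f i j +
        ∑ i ∈ B ∪ C, ∑ j ∈ B ∪ C, f i j := by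
  simp only [sum_union hAB, sum_union hAC, sum_union hBC,
    sum_union (disjoint_union_left.2 ⟨hAC, hBC⟩), sum_add_distrib]
  abel

theorem sum_mul_mergeCost_union {R : Type*} [CommRing R] {w : I → R} {W : Finset I → R}
    {f : I → I → R} (hW : ∀ S, (∑ i ∈ S, w i) * W S = ∑ i ∈ S, ∑ j ∈ S, f i j)
    (hAB : Disjoint A B) (hAC : Disjoint A C) (hBC : Disjoint B C) :
    (∑ i ∈ A, w i + ∑ i ∈ B, w i + ∑ i ∈ C, w i) * mergeCost W (A ∪ B) C =
      (∑ i ∈ A, w i + ∑ i ∈ C, w i) * mergeCost W A C +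
        (∑ i ∈ B, w i + ∑ i ∈ C, w i) * mergeCost W B C -
        (∑ i ∈ C, w i) * mergeCost W A B := by
  have third_difference := sum_sum_union_union_add f hAB hAC hBC
  simp only [← hW] at third_difference
  simp only [sum_union hAB, sum_union hAC, sum_union hBC,
    sum_union (disjoint_union_left.2 ⟨hAC, hBC⟩)] at third_difference
  simp only [mergeCost]
  linear_combination third_difference

end PairSums

theorem sum_smul_sub_centerMass_eq_zero {I k V : Type*} [Field k] [AddCommGroup V] [Module k V]
    {w : I → k} {S : Finset I} (hS : ∑ i ∈ S, w i ≠ 0) (x : I → V) :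
    ∑ i ∈ S, w i • (x i - S.centerMass w x) = 0 := by
  simp only [smul_sub, sum_sub_distrib, ← sum_smul, centerMass, smul_inv_smul₀ hS, sub_self]

section Inertia

variable {E I : Type*} [SeminormedAddCommGroup E] [InnerProductSpace ℝ E]
  {w : I → ℝ} {S : Finset I}

theorem sum_mul_norm_sub_sq_eq_clusterInertia_add (hS : ∑ i ∈ S, w i ≠ 0) (x : I → E) (p : E) :
    ∑ i ∈ S, w i * ‖x i - p‖ ^ 2 =
      clusterInertia w x S + (∑ i ∈ S, w i) * ‖S.centerMass w x - p‖ ^ 2 := by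
  set g := S.centerMass w x with hg
  have cross_terms : ∑ i ∈ S, w i * ⟪x i - g, g - p⟫ = 0 := by
    simp only [← real_inner_smul_left, ← sum_inner, hg, sum_smul_sub_centerMass_eq_zero hS,
      inner_zero_left]
  calc ∑ i ∈ S, w i * ‖x i - p‖ ^ 2
      = ∑ i ∈ S, (w i * ‖x i - g‖ ^ 2 + 2 * (w i * ⟪x i - g, g - p⟫) + w i * ‖g - p‖ ^ 2) := by
        refine sum_congr rfl fun i _ ↦ ?_
        rw [← sub_add_sub_cancel (x i) g p, norm_add_sq_real]
        ring
    _ = clusterInertia w x S + (∑ i ∈ S, w i) * ‖g - p‖ ^ 2 := by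
        rw [sum_add_distrib, sum_add_distrib, ← mul_sum, cross_terms, ← sum_mul, clusterInertia]
        ring

theorem sum_mul_clusterInertia_eq_sum_sum (hS : ∑ i ∈ S, w i ≠ 0) (x : I → E) :
    (∑ i ∈ S, w i) * clusterInertia w x S =
      ∑ i ∈ S, ∑ j ∈ S, w i * w j * ‖x i - x j‖ ^ 2 / 2 := by
  have inner_sum (i : I) : ∑ j ∈ S, w i * w j * ‖x i - x j‖ ^ 2 / 2 =
      (w i * clusterInertia w x S +
        (∑ j ∈ S, w j) * (w i * ‖x i - S.centerMass w x‖ ^ 2)) / 2 := by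
    have parallel_axis := sum_mul_norm_sub_sq_eq_clusterInertia_add hS x (x i)
    simp only [norm_sub_rev _ (x i)] at parallel_axis
    simp only [← sum_div, mul_assoc, ← mul_sum, parallel_axis]
    ring
  simp_rw [inner_sum]
  rw [← sum_div, sum_add_distrib, ← sum_mul, ← mul_sum, ← clusterInertia]
  ring

theorem lance_williams_jambu_general [DecidableEq I] (hw : ∀ i, 0 < w i) (x : I → E) (κ : ℝ)
    (Δσ : Finset I → Finset I → ℝ)
    (hΔσ : ∀ A B : Finset I, A.Nonempty → B.Nonempty → Disjoint A B →
      Δσ A B = κ * mergeCost (clusterInertia w x) A B)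
    {A B C : Finset I} (hA : A.Nonempty) (hB : B.Nonempty) (hC : C.Nonempty)
    (hAB : Disjoint A B) (hAC : Disjoint A C) (hBC : Disjoint B C) :
    Δσ (A ∪ B) C =
      ((∑ i ∈ A, w i + ∑ i ∈ C, w i) * Δσ A C + (∑ i ∈ B, w i + ∑ i ∈ C, w i) * Δσ B C -
        (∑ i ∈ C, w i) * Δσ A B) / (∑ i ∈ A, w i + ∑ i ∈ B, w i + ∑ i ∈ C, w i) := by
  have mass_pos {S : Finset I} (hS : S.Nonempty) : 0 < ∑ i ∈ S, w i :=
    sum_pos (fun i _ ↦ hw i) hS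
  have leibniz (S : Finset I) : (∑ i ∈ S, w i) * clusterInertia w x S =
      ∑ i ∈ S, ∑ j ∈ S, w i * w j * ‖x i - x j‖ ^ 2 / 2 := by
    rcases S.eq_empty_or_nonempty with rfl | hS
    · simp
    · exact sum_mul_clusterInertia_eq_sum_sum (mass_pos hS).ne' x
  have total_pos := add_pos (add_pos (mass_pos hA) (mass_pos hB)) (mass_pos hC)
  rw [eq_div_iff total_pos.ne', hΔσ _ _ hA.inl hC (disjoint_union_left.2 ⟨hAC, hBC⟩),
    hΔσ _ _ hA hC hAC, hΔσ _ _ hB hC hBC, hΔσ _ _ hA hB hAB]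
  linear_combination κ * sum_mul_mergeCost_union leibniz hAB hAC hBC

end Inertia

/-- Lance–Williams–Jambu formula: for pairwise disjoint nonempty
clusters `C₁`, `C₂`, `C` and `C₃ = C₁ ∪ C₂`,
`Δσ(C₃,C) = ((|C₁|+|C|)Δσ(C₁,C) + (|C₂|+|C|)Δσ(C₂,C) − |C|Δσ(C₁,C₂)) / (|C₁|+|C₂|+|C|)`. -/
theorem lance_williams_jambu
    {E I : Type*} [NormedAddCommGroup E] [InnerProductSpace ℝ E]
    [Fintype I] [DecidableEq I]
    (x : I → E)
    (g : Finset I → E)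
    (hg : ∀ C : Finset I, g C = ((C.card : ℝ))⁻¹ • ∑ i ∈ C, x i)
    (W : Finset I → ℝ)
    (hW : ∀ C : Finset I, W C = ∑ i ∈ C, ‖x i - g C‖ ^ 2)
    (N : ℝ) (hN : 0 < N)
    (Δσ : Finset I → Finset I → ℝ)
    (hΔσ : ∀ C₁ C₂ : Finset I, C₁.Nonempty → C₂.Nonempty → Disjoint C₁ C₂ →
      Δσ C₁ C₂ = (1 / N) * (W (C₁ ∪ C₂) - W C₁ - W C₂))
    (C₁ C₂ C : Finset I) (h₁ : C₁.Nonempty) (h₂ : C₂.Nonempty) (hC : C.Nonempty)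
    (h₁₂ : Disjoint C₁ C₂) (h₁C : Disjoint C₁ C) (h₂C : Disjoint C₂ C) :
    Δσ (C₁ ∪ C₂) C =
      (((C₁.card : ℝ) + (C.card : ℝ)) * Δσ C₁ C +
        ((C₂.card : ℝ) + (C.card : ℝ)) * Δσ C₂ C -
        (C.card : ℝ) * Δσ C₁ C₂) /
        ((C₁.card : ℝ) + (C₂.card : ℝ) + (C.card : ℝ)) := by
  have hW_inertia : W = clusterInertia 1 x := by
    ext S; simp only [hW, hg, clusterInertia_one]
  simpa using lance_williams_jambu_general (w := 1) (fun _ ↦ one_pos) x (1 / N) Δσ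
    (hW_inertia ▸ hΔσ) h₁ h₂ hC h₁₂ h₁C h₂C
end
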